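/- Let G₂ = ⟨g₁, g₂ ∣ g₂g₁ = g₁^{-1}g₂⟩ and let α₀, α₁, β₀, β₁ ∈ Aut(G₂) be the automorphisms determined by: α₀(g₁)=g₁, α₀(g₂)=g₂^{-1}; α₁(g₁)=g₁, α₁(g₂)=g₁g₂^{-1}; β₀(g₁)=g₁^{-1}, β₀(g₂)=g₂; β₁(g₁)=g₁^{-1}, β₁(g₂)=g₁g₂. Then for every φ ∈ Aut(G₂) there exists exactly one ψ ∈ {α₀, α₁, β₀, β₁} such that G₂ ⋊_φ ℤ is isomorphic to G₂ ⋊_ψ ℤ; in particular the four groups G₂ ⋊_{α₀} ℤ, G₂ ⋊_{α₁} ℤ, G₂ ⋊_{β₀} ℤ, G₂ ⋊_{β₁} ℤ are pairwise non-isomorphic. -/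

import Mathlib

/-- The single relator `g₂ g₁ g₂⁻¹ g₁` presenting the Klein bottle group
`⟨g₁, g₂ ∣ g₂ g₁ = g₁⁻¹ g₂⟩`. -/
def kleinRels : Set (FreeGroup (Fin 2)) :=
  {FreeGroup.of 1 * FreeGroup.of 0 * (FreeGroup.of 1)⁻¹ * FreeGroup.of 0}

namespace KleinAux

abbrev K := PresentedGroup kleinRels
abbrev ga : K := PresentedGroup.of 0
abbrev gb : K := PresentedGroup.of 1
abbrev SD {H : Type*} [Group H] (φ : MulAut H) :=
  SemidirectProduct H (Multiplicative ℤ) (zpowersHom (MulAut H) φ)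

theorem rel : gb * ga * gb⁻¹ = ga⁻¹ := by
  have h : (PresentedGroup.mk kleinRels
      (FreeGroup.of 1 * FreeGroup.of 0 * (FreeGroup.of 1)⁻¹ * FreeGroup.of 0)) = 1 :=
    PresentedGroup.one_of_mem (by simp [kleinRels])
  rw [eq_inv_iff_mul_eq_one]
  simp only [map_mul, map_inv] at h
  exact h

/-- Homomorphisms out of the Klein bottle group. -/
def klift {A : Type*} [Group A] (x y : A) (h : y * x * y⁻¹ * x = 1) : K →* A :=
  PresentedGroup.toGroup (rels := kleinRels) (f := ![x, y]) (by
    intro r hr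
    rw [kleinRels, Set.mem_singleton_iff] at hr
    subst hr
    simpa using h)

@[simp] theorem klift_a {A : Type*} [Group A] (x y : A) (h : y * x * y⁻¹ * x = 1) :
    klift x y h ga = x := by simp [klift, ga]
@[simp] theorem klift_b {A : Type*} [Group A] (x y : A) (h : y * x * y⁻¹ * x = 1) :
    klift x y h gb = y := by simp [klift, gb]

theorem k_ext {A : Type*} [Group A] {f g : K →* A} (ha : f ga = g ga) (hb : f gb = g gb) :
    f = g := by
  apply PresentedGroup.ext
  intro i
  fin_cases i
  · exact ha
  · exact hb

theorem conj_zpow_aut {H L : Type*} [Group H] [Group L] (φ : MulAut H) (f : H →* L) (t : L)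
    (h : ∀ x, f (φ x) = t * f x * t⁻¹) (n : ℤ) :
    ∀ x, f ((φ ^ n) x) = t ^ n * f x * (t ^ n)⁻¹ := by
  have h' : ∀ x, f (φ⁻¹ x) = t⁻¹ * f x * t := by
    intro x
    have := h (φ⁻¹ x)
    rw [MulAut.apply_inv_self] at this
    rw [this]; group
  induction n using Int.induction_on with
  | zero => intro x; simp
  | succ n ih =>
    intro x
    rw [zpow_add_one, MulAut.mul_apply, ih, h, zpow_add_one]; group
  | pred n ih =>
    intro x
    rw [zpow_sub_one, MulAut.mul_apply, ih, h', zpow_sub_one]; group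

/-- Homomorphisms out of a semidirect product with `ℤ`. -/
def slift {H L : Type*} [Group H] [Group L] (φ : MulAut H) (f : H →* L) (t : L)
    (h : ∀ x, f (φ x) = t * f x * t⁻¹) : SD φ →* L :=
  SemidirectProduct.lift f (zpowersHom L t) (by
    intro n
    ext x
    simpa [← map_zpow] using conj_zpow_aut φ f t h n.toAdd x)

abbrev tt {H : Type*} [Group H] (φ : MulAut H) : SD φ :=
  SemidirectProduct.inr (Multiplicative.ofAdd 1)

@[simp] theorem slift_inl {H L : Type*} [Group H] [Group L] (φ : MulAut H) (f : H →* L) (t : L)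
    (h : ∀ x, f (φ x) = t * f x * t⁻¹) (x : H) :
    slift φ f t h (SemidirectProduct.inl x) = f x := by simp [slift]
@[simp] theorem slift_t {H L : Type*} [Group H] [Group L] (φ : MulAut H) (f : H →* L) (t : L)
    (h : ∀ x, f (φ x) = t * f x * t⁻¹) :
    slift φ f t h (tt φ) = t := by simp [slift, tt]

theorem s_ext {H L : Type*} [Group H] [Group L] {φ : MulAut H} {f g : SD φ →* L}
    (h : ∀ x, f (SemidirectProduct.inl x) = g (SemidirectProduct.inl x))
    (ht : f (tt φ) = g (tt φ)) : f = g := by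
  apply SemidirectProduct.hom_ext
  · ext x; exact h x
  · apply MonoidHom.ext_mint; exact ht

theorem tt_conj {H : Type*} [Group H] (φ : MulAut H) (x : H) :
    (SemidirectProduct.inl (φ x) : SD φ)
      = tt φ * SemidirectProduct.inl x * (tt φ)⁻¹ := by
  have := SemidirectProduct.inl_aut (φ := zpowersHom (MulAut H) φ) (Multiplicative.ofAdd 1) x
  simpa using this

theorem iso_conj {H : Type*} [Group H] (φ ψ : MulAut H) (c : H)
    (h : φ = MulAut.conj c * ψ) : Nonempty (SD φ ≃* SD ψ) := by
  have h1 : ∀ x, φ x = c * ψ x * c⁻¹ := by intro x; simp [h]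
  have h2 : ∀ x, ψ x = c⁻¹ * φ x * c := by intro x; rw [h1]; group
  let F : SD φ →* SD ψ := slift φ SemidirectProduct.inl
    (SemidirectProduct.inl c * tt ψ) (by
      intro x
      rw [h1, map_mul, map_mul, tt_conj, map_inv]; group)
  let G : SD ψ →* SD φ := slift ψ SemidirectProduct.inl
    (SemidirectProduct.inl c⁻¹ * tt φ) (by
      intro x
      rw [h2, map_mul, map_mul, tt_conj, map_inv]; group)
  refine ⟨MonoidHom.toMulEquiv F G ?_ ?_⟩
  · apply s_ext
    · intro x; simp only [F, G, MonoidHom.comp_apply, slift_inl, MonoidHom.id_apply]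
    · simp only [F, G, MonoidHom.comp_apply, slift_inl, slift_t, map_mul, MonoidHom.id_apply, map_inv]
      group
  · apply s_ext
    · intro x; simp only [F, G, MonoidHom.comp_apply, slift_inl, MonoidHom.id_apply]
    · simp only [F, G, MonoidHom.comp_apply, slift_inl, slift_t, map_mul, MonoidHom.id_apply, map_inv]
      group

/-! ### Structure of the Klein bottle group -/

theorem b_conj (m : ℤ) : gb * ga ^ m * gb⁻¹ = ga ^ (-m) := by
  rw [← conj_zpow, rel, inv_zpow, zpow_neg]

theorem b_conj' (m : ℤ) : gb⁻¹ * ga ^ m * gb = ga ^ (-m) := by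
  have := b_conj (-m)
  rw [neg_neg] at this
  rw [← this]; group

theorem bpow_a (n : ℤ) : ∀ m : ℤ, ∃ k : ℤ, gb ^ n * ga ^ m = ga ^ k * gb ^ n := by
  induction n using Int.induction_on with
  | zero => intro m; exact ⟨m, by simp⟩
  | succ n ih =>
    intro m
    obtain ⟨k, hk⟩ := ih (-m)
    refine ⟨k, ?_⟩
    rw [zpow_add_one, ← mul_assoc, ← hk, ← b_conj]; group
  | pred n ih =>
    intro m
    obtain ⟨k, hk⟩ := ih (-m)
    refine ⟨k, ?_⟩
    rw [zpow_sub_one, ← mul_assoc, ← hk, ← b_conj']; group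

theorem normal_form (x : K) : ∃ m n : ℤ, x = ga ^ m * gb ^ n := by
  let S : Subgroup K :=
    { carrier := {x | ∃ m n : ℤ, x = ga ^ m * gb ^ n}
      one_mem' := ⟨0, 0, by simp⟩
      mul_mem' := by
        rintro _ _ ⟨m, n, rfl⟩ ⟨p, q, rfl⟩
        obtain ⟨k, hk⟩ := bpow_a n p
        refine ⟨m + k, n + q, ?_⟩
        rw [zpow_add, zpow_add, mul_assoc, ← mul_assoc (gb ^ n), hk]
        simp only [mul_assoc]
      inv_mem' := by
        rintro _ ⟨m, n, rfl⟩
        obtain ⟨k, hk⟩ := bpow_a (-n) (-m)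
        refine ⟨k, -n, ?_⟩
        rw [← hk]; group }
  have : x ∈ S := by
    apply (Subgroup.closure_le S).2 _
      (show x ∈ Subgroup.closure (Set.range (PresentedGroup.of (rels := kleinRels))) by
        rw [PresentedGroup.closure_range_of]; trivial)
    rintro _ ⟨i, rfl⟩
    fin_cases i
    · exact ⟨1, 0, by simp⟩
    · exact ⟨0, 1, by simp⟩
  exact this

/-- exponent of `g₂` -/
def bexp : K →* Multiplicative ℤ := klift 1 (Multiplicative.ofAdd (1 : ℤ)) (by simp)

theorem bexp_nf (m n : ℤ) : bexp (ga ^ m * gb ^ n) = Multiplicative.ofAdd n := by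
  rw [map_mul, map_zpow, map_zpow, bexp, klift_a, klift_b, one_zpow, one_mul, ← ofAdd_zsmul]
  simp

theorem a_inj {m n : ℤ} (h : ga ^ m = ga ^ n) : m = n := by
  let D : K →* DihedralGroup 0 := klift (DihedralGroup.r 1) (DihedralGroup.sr 0) (by
    simp)
  have h2 := congrArg D h
  rw [map_zpow, map_zpow] at h2
  simp only [D, klift_a, DihedralGroup.r_zpow, DihedralGroup.r.injEq, one_mul] at h2
  simpa using h2

theorem aut_a_aux (φ : MulAut K) : ∃ m : ℤ, φ ga = ga ^ m := by
  obtain ⟨m, n, h⟩ := normal_form (φ ga)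
  have h1 := congrArg (fun x => bexp (φ x)) rel
  simp only [map_mul, map_inv] at h1
  rw [h, bexp_nf, mul_inv_cancel_comm] at h1
  have : n = 0 := by
    have h2 := congrArg Multiplicative.toAdd h1
    simp at h2
    omega
  exact ⟨m, by simpa [this] using h⟩

theorem aut_form (φ : MulAut K) : ∃ e p d : ℤ, (e = 1 ∨ e = -1) ∧ (d = 1 ∨ d = -1) ∧
    φ ga = ga ^ e ∧ φ gb = ga ^ p * gb ^ d := by
  obtain ⟨m, hm⟩ := aut_a_aux φ
  obtain ⟨m', hm'⟩ := aut_a_aux φ⁻¹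
  obtain ⟨p, q, hq⟩ := normal_form (φ gb)
  obtain ⟨p', q', hq'⟩ := normal_form (φ⁻¹ gb)
  refine ⟨m, p, q, ?_, ?_, hm, hq⟩
  · have h : φ (φ⁻¹ ga) = ga := MulAut.apply_inv_self _ _ _
    rw [hm', map_zpow, hm, ← zpow_mul] at h
    have h2 : m * m' = 1 := a_inj (by rw [h, zpow_one])
    exact Int.isUnit_iff.1 (IsUnit.of_mul_eq_one _ h2)
  · have h : φ (φ⁻¹ gb) = gb := MulAut.apply_inv_self _ _ _
    rw [hq', map_mul, map_zpow, map_zpow, hm, hq] at h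
    have h2 := congrArg bexp h
    rw [map_mul, map_zpow bexp (ga ^ m), map_zpow bexp (ga ^ p * gb ^ q), bexp_nf] at h2
    have h3 : bexp (ga ^ m) = 1 := by simpa using bexp_nf m 0
    have h4 : bexp gb = Multiplicative.ofAdd 1 := by simpa using bexp_nf 0 1
    rw [h3, h4] at h2
    have h5 := congrArg Multiplicative.toAdd h2
    simp at h5
    exact Int.isUnit_iff.1 (IsUnit.of_mul_eq_one q' (by linarith))

theorem bd_conj {d : ℤ} (hd : d = 1 ∨ d = -1) (i : ℤ) :
    gb ^ d * ga ^ i = ga ^ (-i) * gb ^ d := by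
  rcases hd with rfl | rfl
  · rw [← b_conj]; group
  · rw [← b_conj']; group

theorem exists_conj (φ ψ : MulAut K) {e e' p k d : ℤ} (he : e = 1 ∨ e = -1)
    (he' : e' = 1 ∨ e' = -1) (hd : d = 1 ∨ d = -1)
    (ha : φ ga = ga ^ e) (hb : φ gb = ga ^ p * gb ^ d)
    (ha' : ψ ga = ga ^ e') (hb' : ψ gb = ga ^ k * gb ^ d) (hpk : 2 ∣ p - k) :
    ∃ c, φ = MulAut.conj c * ψ := by
  have key : ∀ i : ℤ, ga ^ i * (ga ^ k * gb ^ d) * (ga ^ i)⁻¹ = ga ^ (k + 2 * i) * gb ^ d := by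
    intro i
    rw [← zpow_neg, mul_assoc, mul_assoc, bd_conj hd, neg_neg, ← mul_assoc, ← mul_assoc,
      ← zpow_add, ← zpow_add]
    congr 2; ring
  have key' : ∀ i : ℤ, ga ^ i * (ga ^ (-k) * gb ^ d) * (ga ^ i)⁻¹ = ga ^ (-k + 2 * i) * gb ^ d := by
    intro i
    rw [← zpow_neg, mul_assoc, mul_assoc, bd_conj hd, neg_neg, ← mul_assoc, ← mul_assoc,
      ← zpow_add, ← zpow_add]
    congr 2; ring
  have mk : ∀ c, φ ga = c * ψ ga * c⁻¹ → φ gb = c * ψ gb * c⁻¹ → φ = MulAut.conj c * ψ := by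
    intro c h1 h2
    have : φ.toMonoidHom = (MulAut.conj c * ψ).toMonoidHom :=
      k_ext (by simpa using h1) (by simpa using h2)
    ext x
    exact DFunLike.congr_fun this x
  obtain ⟨i, hi⟩ := hpk
  by_cases hee : e = e'
  · refine ⟨ga ^ i, mk _ ?_ ?_⟩
    · rw [ha, ha', hee]; group
    · rw [hb, hb', key]; congr 2; linarith
  · refine ⟨ga ^ (i + k) * gb, mk _ ?_ ?_⟩
    · have : e = - e' := by omega
      rw [ha, ha', this, ← b_conj]
      have h3 : ga ^ (i + k) * gb * ga ^ e' * (ga ^ (i + k) * gb)⁻¹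
        = ga ^ (i + k) * (gb * ga ^ e' * gb⁻¹) * (ga ^ (i + k))⁻¹ := by group
      rw [h3, b_conj]; group
    · have h3 : ga ^ (i + k) * gb * (ga ^ k * gb ^ d) * (ga ^ (i + k) * gb)⁻¹
        = ga ^ (i + k) * ((gb * ga ^ k * gb⁻¹) * gb ^ d) * (ga ^ (i + k))⁻¹ := by group
      rw [hb, hb', h3, b_conj, key']; congr 2; linarith

/-! ### Counting homomorphisms to `ZMod 6` -/

abbrev A6 := Multiplicative (ZMod 6)

theorem card_hom (ψ : MulAut K) {e k d : ℤ}
    (ha : ψ ga = ga ^ e) (hb : ψ gb = ga ^ k * gb ^ d) :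
    Nat.card (SD ψ →* A6) = Nat.card {v : ZMod 6 × ZMod 6 × ZMod 6 //
      v.1 + v.1 = 0 ∧ (e : ZMod 6) * v.1 = v.1 ∧
        (k : ZMod 6) * v.1 + (d : ZMod 6) * v.2.1 = v.2.1} := by
  let f : (SD ψ →* A6) → ZMod 6 × ZMod 6 × ZMod 6 := fun F =>
    ((F (SemidirectProduct.inl ga)).toAdd, (F (SemidirectProduct.inl gb)).toAdd,
      (F (tt ψ)).toAdd)
  have hinj : Function.Injective f := by
    intro F G hFG
    simp only [f, Prod.mk.injEq] at hFG
    obtain ⟨h1, h2, h3⟩ := hFG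
    apply s_ext
    · have : F.comp SemidirectProduct.inl = G.comp SemidirectProduct.inl := k_ext h1 h2
      exact fun x => DFunLike.congr_fun this x
    · exact h3
  have hrange : Set.range f = {v | v.1 + v.1 = 0 ∧ (e : ZMod 6) * v.1 = v.1 ∧
        (k : ZMod 6) * v.1 + (d : ZMod 6) * v.2.1 = v.2.1} := by
    ext ⟨x, y, z⟩
    constructor
    · rintro ⟨F, hF⟩
      simp only [f, Prod.mk.injEq] at hF
      obtain ⟨rfl, rfl, rfl⟩ := hF
      have r0 := congrArg (fun x => (F (SemidirectProduct.inl x)).toAdd) rel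
      have r1 := congrArg (fun x => (F x).toAdd) (tt_conj ψ ga)
      have r2 := congrArg (fun x => (F x).toAdd) (tt_conj ψ gb)
      simp only [ha, hb, map_mul, map_inv, map_zpow, toAdd_mul, toAdd_inv, toAdd_zpow,
        zsmul_eq_mul] at r0 r1 r2
      refine ⟨?_, ?_, ?_⟩
      · linear_combination r0
      · linear_combination r1
      · linear_combination r2
    · rintro ⟨h1, h2, h3⟩
      simp only at h1 h2 h3
      let g : K →* A6 := klift (Multiplicative.ofAdd x) (Multiplicative.ofAdd y) (by
        rw [mul_inv_cancel_comm, ← ofAdd_add, h1]; rfl)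
      have hg : g.comp ψ.toMonoidHom = g := by
        apply k_ext
        · simp only [MonoidHom.comp_apply, MulEquiv.toMonoidHom_eq_coe, MonoidHom.coe_coe, ha,
            map_zpow, g, klift_a, ← ofAdd_zsmul, zsmul_eq_mul, h2]
        · simp only [MonoidHom.comp_apply, MulEquiv.toMonoidHom_eq_coe, MonoidHom.coe_coe, hb,
            map_zpow, map_mul, g, klift_a, klift_b, ← ofAdd_zsmul, zsmul_eq_mul, ← ofAdd_add, h3]
      refine ⟨slift ψ g (Multiplicative.ofAdd z) ?_, ?_⟩
      · intro w
        rw [mul_inv_cancel_comm]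
        exact DFunLike.congr_fun hg w
      · simp only [f, slift_inl, slift_t, g, klift_a, klift_b, toAdd_ofAdd]
  rw [Nat.card_congr (Equiv.ofInjective f hinj), hrange]
  rfl

theorem card_eq {φ ψ : MulAut K} (h : Nonempty (SD φ ≃* SD ψ)) :
    Nat.card (SD φ →* A6) = Nat.card (SD ψ →* A6) := by
  obtain ⟨e⟩ := h
  exact Nat.card_congr (MulEquiv.monoidHomCongrLeftEquiv e)

end KleinAux

open KleinAux in
/-- Let `G₂ = ⟨g₁, g₂ ∣ g₂ g₁ = g₁⁻¹ g₂⟩` be the Klein bottle group and let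
`α₀, α₁, β₀, β₁ ∈ Aut(G₂)` be the automorphisms with `α₀ g₁ = g₁`,
`α₀ g₂ = g₂⁻¹`; `α₁ g₁ = g₁`, `α₁ g₂ = g₁ g₂⁻¹`; `β₀ g₁ = g₁⁻¹`, `β₀ g₂ = g₂`;
`β₁ g₁ = g₁⁻¹`, `β₁ g₂ = g₁ g₂`.  Then for every `φ ∈ Aut(G₂)` there is
exactly one `ψ ∈ {α₀, α₁, β₀, β₁}` such that `G₂ ⋊_φ ℤ ≅ G₂ ⋊_ψ ℤ`; in
particular the four groups `G₂ ⋊_{α₀} ℤ`, `G₂ ⋊_{α₁} ℤ`, `G₂ ⋊_{β₀} ℤ`,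
`G₂ ⋊_{β₁} ℤ` are pairwise non-isomorphic. -/
theorem klein_semidirect_classification
    (α₀ α₁ β₀ β₁ : MulAut (PresentedGroup kleinRels))
    (g₁ g₂ : PresentedGroup kleinRels)
    (hg₁ : g₁ = PresentedGroup.of 0) (hg₂ : g₂ = PresentedGroup.of 1)
    (hα₀ : α₀ g₁ = g₁ ∧ α₀ g₂ = g₂⁻¹)
    (hα₁ : α₁ g₁ = g₁ ∧ α₁ g₂ = g₁ * g₂⁻¹)
    (hβ₀ : β₀ g₁ = g₁⁻¹ ∧ β₀ g₂ = g₂)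
    (hβ₁ : β₁ g₁ = g₁⁻¹ ∧ β₁ g₂ = g₁ * g₂)
    (φ : MulAut (PresentedGroup kleinRels)) :
    ∃! ψ : MulAut (PresentedGroup kleinRels),
      ψ ∈ ({α₀, α₁, β₀, β₁} : Set (MulAut (PresentedGroup kleinRels))) ∧
      Nonempty
        ((SemidirectProduct (PresentedGroup kleinRels) (Multiplicative ℤ)
            (zpowersHom (MulAut (PresentedGroup kleinRels)) φ)) ≃*
         (SemidirectProduct (PresentedGroup kleinRels) (Multiplicative ℤ)
            (zpowersHom (MulAut (PresentedGroup kleinRels)) ψ))) := by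
  subst hg₁ hg₂
  have a0 : α₀ ga = ga ^ (1 : ℤ) := by rw [hα₀.1, zpow_one]
  have a0' : α₀ gb = ga ^ (0 : ℤ) * gb ^ (-1 : ℤ) := by
    rw [hα₀.2, zpow_zero, one_mul, zpow_neg_one]
  have a1 : α₁ ga = ga ^ (1 : ℤ) := by rw [hα₁.1, zpow_one]
  have a1' : α₁ gb = ga ^ (1 : ℤ) * gb ^ (-1 : ℤ) := by
    rw [hα₁.2, zpow_one, zpow_neg_one]
  have b0 : β₀ ga = ga ^ (-1 : ℤ) := by rw [hβ₀.1, zpow_neg_one]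
  have b0' : β₀ gb = ga ^ (0 : ℤ) * gb ^ (1 : ℤ) := by
    rw [hβ₀.2, zpow_zero, one_mul, zpow_one]
  have b1 : β₁ ga = ga ^ (-1 : ℤ) := by rw [hβ₁.1, zpow_neg_one]
  have b1' : β₁ gb = ga ^ (1 : ℤ) * gb ^ (1 : ℤ) := by
    rw [hβ₁.2, zpow_one, zpow_one]
  have ca0 : Nat.card (SD α₀ →* A6) = 24 := by
    rw [card_hom α₀ a0 a0', Nat.card_eq_fintype_card]; rfl
  have ca1 : Nat.card (SD α₁ →* A6) = 12 := by
    rw [card_hom α₁ a1 a1', Nat.card_eq_fintype_card]; rfl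
  have cb0 : Nat.card (SD β₀ →* A6) = 72 := by
    rw [card_hom β₀ b0 b0', Nat.card_eq_fintype_card]; rfl
  have cb1 : Nat.card (SD β₁ →* A6) = 36 := by
    rw [card_hom β₁ b1 b1', Nat.card_eq_fintype_card]; rfl
  refine existsUnique_of_exists_of_unique ?_ ?_
  · obtain ⟨e, p, d, he, hd, h1, h2⟩ := aut_form φ
    have hp : 2 ∣ p - 0 ∨ 2 ∣ p - 1 := by omega
    rcases hd with rfl | rfl <;> rcases hp with hp | hp
    · obtain ⟨c, hc⟩ := exists_conj φ β₀ he (Or.inr rfl) (Or.inl rfl) h1 h2 b0 b0' hp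
      exact ⟨β₀, by simp, iso_conj _ _ c hc⟩
    · obtain ⟨c, hc⟩ := exists_conj φ β₁ he (Or.inr rfl) (Or.inl rfl) h1 h2 b1 b1' hp
      exact ⟨β₁, by simp, iso_conj _ _ c hc⟩
    · obtain ⟨c, hc⟩ := exists_conj φ α₀ he (Or.inl rfl) (Or.inr rfl) h1 h2 a0 a0' hp
      exact ⟨α₀, by simp, iso_conj _ _ c hc⟩
    · obtain ⟨c, hc⟩ := exists_conj φ α₁ he (Or.inl rfl) (Or.inr rfl) h1 h2 a1 a1' hp
      exact ⟨α₁, by simp, iso_conj _ _ c hc⟩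
  · rintro ψ ψ' ⟨hψ, e1⟩ ⟨hψ', e2⟩
    have hc := (card_eq e1).symm.trans (card_eq e2)
    simp only [Set.mem_insert_iff, Set.mem_singleton_iff] at hψ hψ'
    rcases hψ with rfl | rfl | rfl | rfl <;> rcases hψ' with rfl | rfl | rfl | rfl <;>
      first
        | rfl
        | (exfalso; omega)
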